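/- arXiv:1311.7449 — 2 statements merged into one kernel-verified Lean document; each statement's English description precedes it below -/
import Mathlib

section
/- Let a, b, θ be integers with 2 ≤ θ ≤ a−1 and a ≤ b, and let p ∈ [0,1]. Define x_0 = y_0 = s_0 = S_0 = p and, for t ≥ 1, x_t = φ_{a,p,θ}(y_{t−1}), y_t = φ_{b,p,θ}(x_{t−1}), s_t = φ_{a,p,θ}(s_{t−1}), and S_t = φ_{b,p,θ}(S_{t−1}). Then for every t ≥ 0 one has s_t ≤ x_t ≤ S_t and s_t ≤ y_t ≤ S_t; consequently the limits satisfy s_∞ ≤ x_∞ ≤ S_∞ and s_∞ ≤ y_∞ ≤ S_∞. -/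
/-- `φ_{n,p,θ}(x) = p + (1-p) * ∑_{k=θ}^{n} C(n,k) x^k (1-x)^{n-k}`. -/
noncomputable def phiBP (n θ : ℕ) (p x : ℝ) : ℝ :=
  p + (1 - p) * ∑ k ∈ Finset.Icc θ n, (n.choose k : ℝ) * x ^ k * (1 - x) ^ (n - k)

/-- The pair `(x_t, y_t)` of the coupled iteration
`x_0 = y_0 = p`, `x_t = φ_{a,p,θ}(y_{t-1})`, `y_t = φ_{b,p,θ}(x_{t-1})`. -/
noncomputable def xyBP (a b θ : ℕ) (p : ℝ) : ℕ → ℝ × ℝ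
  | 0 => (p, p)
  | t + 1 => (phiBP a θ p (xyBP a b θ p t).2, phiBP b θ p (xyBP a b θ p t).1)

/-- `x_t`. -/
noncomputable def xBP (a b θ : ℕ) (p : ℝ) (t : ℕ) : ℝ := (xyBP a b θ p t).1

/-- `y_t`. -/
noncomputable def yBP (a b θ : ℕ) (p : ℝ) (t : ℕ) : ℝ := (xyBP a b θ p t).2

/-- The one-dimensional iteration `s_0 = p`, `s_t = φ_{n,p,θ}(s_{t-1})`. -/
noncomputable def sBP (n θ : ℕ) (p : ℝ) : ℕ → ℝ
  | 0 => p
  | t + 1 => phiBP n θ p (sBP n θ p t)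

/-- Upper tail of the binomial distribution. -/
noncomputable def tailS (n θ : ℕ) (x : ℝ) : ℝ :=
  ∑ k ∈ Finset.Icc θ n, (n.choose k : ℝ) * x ^ k * (1 - x) ^ (n - k)

lemma tailS_zero (n : ℕ) (x : ℝ) : tailS n 0 x = 1 := by
  have h := add_pow x (1 - x) n
  have e : Finset.Icc 0 n = Finset.range (n + 1) := by
    ext k; simp
  rw [tailS, e]
  rw [show x + (1 - x) = 1 by ring, one_pow] at h
  refine Eq.trans ?_ h.symm
  refine Finset.sum_congr rfl fun k _ => by ring

lemma tailS_nil (θ : ℕ) (x : ℝ) : tailS 0 (θ + 1) x = 0 := by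
  simp [tailS]

lemma mass_succ (n k : ℕ) (x : ℝ) :
    ((n + 1).choose (k + 1) : ℝ) * x ^ (k + 1) * (1 - x) ^ (n + 1 - (k + 1)) =
      x * ((n.choose k : ℝ) * x ^ k * (1 - x) ^ (n - k)) +
      (1 - x) * ((n.choose (k + 1) : ℝ) * x ^ (k + 1) * (1 - x) ^ (n - (k + 1))) := by
  rw [Nat.choose_succ_succ, Nat.add_sub_add_right]
  push_cast
  rcases lt_or_ge k n with h | h
  · obtain ⟨d, rfl⟩ := Nat.exists_eq_add_of_lt h
    rw [show k + d + 1 - k = d + 1 by omega, show k + d + 1 - (k + 1) = d by omega]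
    ring
  · rw [Nat.choose_eq_zero_of_lt (show n < k + 1 by omega)]
    push_cast
    ring

lemma sum_shift (f : ℕ → ℝ) (θ n : ℕ) :
    ∑ k ∈ Finset.Icc (θ + 1) (n + 1), f k = ∑ k ∈ Finset.Icc θ n, f (k + 1) := by
  rw [← Finset.map_add_right_Icc, Finset.sum_map]
  rfl

lemma tailS_succ (n θ : ℕ) (x : ℝ) :
    tailS (n + 1) (θ + 1) x = x * tailS n θ x + (1 - x) * tailS n (θ + 1) x := by
  have h2 : tailS n (θ + 1) x = ∑ k ∈ Finset.Icc θ n,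
      (n.choose (k + 1) : ℝ) * x ^ (k + 1) * (1 - x) ^ (n - (k + 1)) := by
    rw [← sum_shift (fun k => (n.choose k : ℝ) * x ^ k * (1 - x) ^ (n - k)), tailS]
    refine Finset.sum_subset (Finset.Icc_subset_Icc le_rfl (by omega)) ?_
    intro k hk hk'
    rw [Finset.mem_Icc] at hk hk'
    rw [Nat.choose_eq_zero_of_lt (show n < k by omega)]
    simp
  rw [h2, tailS, tailS, sum_shift, Finset.mul_sum, Finset.mul_sum, ← Finset.sum_add_distrib]
  exact Finset.sum_congr rfl fun k _ => mass_succ n k x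

lemma tailS_nonneg (n θ : ℕ) {x : ℝ} (h0 : 0 ≤ x) (h1 : x ≤ 1) : 0 ≤ tailS n θ x := by
  have : 0 ≤ 1 - x := by linarith
  exact Finset.sum_nonneg fun k _ => by positivity

lemma tailS_le_one (n θ : ℕ) {x : ℝ} (h0 : 0 ≤ x) (h1 : x ≤ 1) : tailS n θ x ≤ 1 := by
  have : 0 ≤ 1 - x := by linarith
  rw [← tailS_zero n x]
  refine Finset.sum_le_sum_of_subset_of_nonneg
    (Finset.Icc_subset_Icc (Nat.zero_le _) le_rfl) fun k _ _ => by positivity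

lemma tailS_anti (n θ : ℕ) {x : ℝ} (h0 : 0 ≤ x) (h1 : x ≤ 1) :
    tailS n (θ + 1) x ≤ tailS n θ x := by
  have : 0 ≤ 1 - x := by linarith
  refine Finset.sum_le_sum_of_subset_of_nonneg
    (Finset.Icc_subset_Icc (by omega) le_rfl) fun k _ _ => by positivity

lemma tailS_mono_n (θ : ℕ) {x : ℝ} (h0 : 0 ≤ x) (h1 : x ≤ 1) :
    Monotone fun n => tailS n θ x := by
  refine monotone_nat_of_le_succ fun n => ?_
  cases θ with
  | zero => simp [tailS_zero]
  | succ θ =>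
    rw [tailS_succ]
    nlinarith [tailS_anti n θ h0 h1]

lemma tailS_mono_x (n θ : ℕ) {x y : ℝ} (h0 : 0 ≤ x) (hxy : x ≤ y) (h1 : y ≤ 1) :
    tailS n θ x ≤ tailS n θ y := by
  induction n generalizing θ with
  | zero =>
    cases θ with
    | zero => simp [tailS_zero]
    | succ θ => simp [tailS_nil]
  | succ n ih =>
    cases θ with
    | zero => simp [tailS_zero]
    | succ θ =>
      rw [tailS_succ, tailS_succ]
      have e1 := mul_le_mul_of_nonneg_left (ih θ) h0
      have e2 := mul_le_mul_of_nonneg_left (ih (θ + 1)) (show 0 ≤ 1 - x by linarith)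
      have e3 := mul_nonneg (sub_nonneg.2 hxy)
        (sub_nonneg.2 (tailS_anti n θ (h0.trans hxy) h1))
      nlinarith

lemma phiBP_eq (n θ : ℕ) (p x : ℝ) : phiBP n θ p x = p + (1 - p) * tailS n θ x := rfl

lemma phiBP_mem (n θ : ℕ) {p x : ℝ} (hp0 : 0 ≤ p) (hp1 : p ≤ 1) (h0 : 0 ≤ x) (h1 : x ≤ 1) :
    0 ≤ phiBP n θ p x ∧ phiBP n θ p x ≤ 1 := by
  rw [phiBP_eq]
  have a := tailS_nonneg n θ h0 h1
  have b := tailS_le_one n θ h0 h1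
  have : 0 ≤ 1 - p := by linarith
  exact ⟨by positivity, by nlinarith⟩

lemma phiBP_le {n m : ℕ} (θ : ℕ) {p x y : ℝ} (hnm : n ≤ m) (hp1 : p ≤ 1)
    (h0 : 0 ≤ x) (hxy : x ≤ y) (h1 : y ≤ 1) : phiBP n θ p x ≤ phiBP m θ p y := by
  rw [phiBP_eq, phiBP_eq]
  have h := (tailS_mono_x n θ h0 hxy h1).trans (tailS_mono_n θ (h0.trans hxy) h1 hnm)
  have := mul_le_mul_of_nonneg_left h (show 0 ≤ 1 - p by linarith)
  linarith

lemma sBP_mem (n θ : ℕ) {p : ℝ} (hp0 : 0 ≤ p) (hp1 : p ≤ 1) (t : ℕ) :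
    0 ≤ sBP n θ p t ∧ sBP n θ p t ≤ 1 := by
  induction t with
  | zero => exact ⟨hp0, hp1⟩
  | succ t ih => exact phiBP_mem n θ hp0 hp1 ih.1 ih.2

theorem stmt_16 (a b θ : ℕ) (hθ : 2 ≤ θ) (hθa : θ < a) (hab : a ≤ b)
    (p : ℝ) (hp0 : 0 ≤ p) (hp1 : p ≤ 1) :
    (∀ t : ℕ,
      sBP a θ p t ≤ xBP a b θ p t ∧ xBP a b θ p t ≤ sBP b θ p t ∧
      sBP a θ p t ≤ yBP a b θ p t ∧ yBP a b θ p t ≤ sBP b θ p t) ∧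
    ∀ sL xL yL SL : ℝ,
      Filter.Tendsto (sBP a θ p) Filter.atTop (nhds sL) →
      Filter.Tendsto (xBP a b θ p) Filter.atTop (nhds xL) →
      Filter.Tendsto (yBP a b θ p) Filter.atTop (nhds yL) →
      Filter.Tendsto (sBP b θ p) Filter.atTop (nhds SL) →
      sL ≤ xL ∧ xL ≤ SL ∧ sL ≤ yL ∧ yL ≤ SL := by
  have main : ∀ t : ℕ,
      sBP a θ p t ≤ xBP a b θ p t ∧ xBP a b θ p t ≤ sBP b θ p t ∧
      sBP a θ p t ≤ yBP a b θ p t ∧ yBP a b θ p t ≤ sBP b θ p t := by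
    intro t
    induction t with
    | zero => exact ⟨le_rfl, le_rfl, le_rfl, le_rfl⟩
    | succ t ih =>
      obtain ⟨i1, i2, i3, i4⟩ := ih
      have s0 := (sBP_mem a θ hp0 hp1 t).1
      have S1 := (sBP_mem b θ hp0 hp1 t).2
      exact ⟨phiBP_le θ le_rfl hp1 s0 i3 (i4.trans S1),
        phiBP_le θ hab hp1 (s0.trans i3) i4 S1,
        phiBP_le θ hab hp1 s0 i1 (i2.trans S1),
        phiBP_le θ le_rfl hp1 (s0.trans i1) i2 S1⟩
  refine ⟨main, fun sL xL yL SL hs hx hy hS => ⟨?_, ?_, ?_, ?_⟩⟩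
  · exact le_of_tendsto_of_tendsto' hs hx fun t => (main t).1
  · exact le_of_tendsto_of_tendsto' hx hS fun t => (main t).2.1
  · exact le_of_tendsto_of_tendsto' hs hy fun t => (main t).2.2.1
  · exact le_of_tendsto_of_tendsto' hy hS fun t => (main t).2.2.2
end

section
/- Let n, θ be integers with 2 ≤ θ ≤ n−1. For p ∈ [0,1] define s_0(p) = p and s_t(p) = φ_{n,p,θ}(s_{t−1}(p)) for t ≥ 1, and let s_∞(p) := lim_{t→∞} s_t(p). Then there exists p_c ∈ (0,1) such that s_∞(p) = 1 for every p with p_c < p ≤ 1, and s_∞(p) < 1 for every p with 0 ≤ p < p_c. -/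
/-- lower tail -/
noncomputable def lowBP (n θ : ℕ) (x : ℝ) : ℝ :=
  ∑ k ∈ Finset.range θ, (n.choose k : ℝ) * x ^ k * (1 - x) ^ (n - k)

/-- lower tail divided by `1 - x` -/
noncomputable def gBP (n θ : ℕ) (x : ℝ) : ℝ :=
  ∑ k ∈ Finset.range θ, (n.choose k : ℝ) * x ^ k * (1 - x) ^ (n - 1 - k)

theorem lowBP_eq (n θ : ℕ) (h : θ < n) (x : ℝ) : lowBP n θ x = (1 - x) * gBP n θ x := by
  unfold lowBP gBP
  rw [Finset.mul_sum]
  refine Finset.sum_congr rfl fun k hk => ?_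
  have hk := Finset.mem_range.1 hk
  have : n - k = (n - 1 - k) + 1 := by omega
  rw [this, pow_succ]; ring

theorem low_add (n θ : ℕ) (h : θ < n) (x : ℝ) :
    lowBP n θ x + ∑ k ∈ Finset.Icc θ n, (n.choose k : ℝ) * x ^ k * (1 - x) ^ (n - k) = 1 := by
  have h1 : Finset.Icc θ n = Finset.Ico θ (n+1) := by ext; simp
  unfold lowBP
  rw [h1, Finset.sum_range_add_sum_Ico _ (by omega)]
  have := add_pow x (1 - x) n
  rw [show x + (1 - x) = 1 by ring, one_pow] at this
  refine Eq.trans ?_ this.symm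
  exact Finset.sum_congr rfl fun k _ => by ring

theorem phi_eq (n θ : ℕ) (h : θ < n) (p x : ℝ) :
    phiBP n θ p x = 1 - (1 - p) * lowBP n θ x := by
  unfold phiBP
  have := low_add n θ h x
  rw [show ∑ k ∈ Finset.Icc θ n, (n.choose k : ℝ) * x ^ k * (1 - x) ^ (n - k) =
    1 - lowBP n θ x by linarith]
  ring

theorem term_nonneg (n k m : ℕ) (x : ℝ) (h0 : 0 ≤ x) (h1 : x ≤ 1) :
    0 ≤ (n.choose k : ℝ) * x ^ k * (1 - x) ^ m := by
  have : 0 ≤ 1 - x := by linarith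
  positivity

theorem low_nonneg (n θ : ℕ) (x : ℝ) (h0 : 0 ≤ x) (h1 : x ≤ 1) : 0 ≤ lowBP n θ x :=
  Finset.sum_nonneg fun k _ => term_nonneg n k _ x h0 h1

theorem low_le (n θ : ℕ) (h : θ < n) (x : ℝ) (h0 : 0 ≤ x) (h1 : x ≤ 1) : lowBP n θ x ≤ 1 := by
  have h2 := low_add n θ h x
  have : 0 ≤ ∑ k ∈ Finset.Icc θ n, (n.choose k : ℝ) * x ^ k * (1 - x) ^ (n - k) :=
    Finset.sum_nonneg fun k _ => term_nonneg n k _ x h0 h1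
  linarith

theorem low_poly (n θ : ℕ) (x : ℝ) :
    lowBP n θ x = (∑ k ∈ Finset.range θ, bernsteinPolynomial ℝ n k).eval x := by
  unfold lowBP
  rw [Polynomial.eval_finsetSum]
  simp [bernsteinPolynomial]

theorem low_deriv (n j : ℕ) :
    Polynomial.derivative (∑ k ∈ Finset.range (j+1), bernsteinPolynomial ℝ n k) =
      - (n * bernsteinPolynomial ℝ (n - 1) j) := by
  induction j with
  | zero => simp [bernsteinPolynomial.derivative_zero]
  | succ j ih =>
    rw [Finset.sum_range_succ, Polynomial.derivative_add, ih, bernsteinPolynomial.derivative_succ]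
    ring

theorem low_anti (n θ : ℕ) (hθ : 2 ≤ θ) : AntitoneOn (lowBP n θ) (Set.Icc 0 1) := by
  obtain ⟨j, rfl⟩ : ∃ j, θ = j + 1 := ⟨θ - 1, by omega⟩
  have : lowBP n (j+1) = fun x => (∑ k ∈ Finset.range (j+1), bernsteinPolynomial ℝ n k).eval x :=
    funext (low_poly n (j+1))
  rw [this]
  refine antitoneOn_of_deriv_nonpos (convex_Icc 0 1) (Polynomial.continuousOn _)
    (Polynomial.differentiable _).differentiableOn fun x hx => ?_
  rw [Polynomial.deriv, low_deriv]
  rw [interior_Icc] at hx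
  have := term_nonneg (n-1) j (n-1-j) x hx.1.le hx.2.le
  simp [bernsteinPolynomial]
  positivity

theorem exists_small (n θ : ℕ) (hθ : 2 ≤ θ) (hθn : θ < n) :
    ∃ x : ℝ, 0 ≤ x ∧ x < 1 ∧ 1 < gBP n θ x := by
  have h2 : (1:ℝ) ≤ 2 ^ n := one_le_pow₀ (by norm_num)
  set x : ℝ := 1 / (2 * 2 ^ n) with hx
  have hx0 : 0 < x := by positivity
  have hx2 : 2 ^ n * x = 1 / 2 := by rw [hx]; field_simp
  have hx1 : x < 1 := by nlinarith
  refine ⟨x, hx0.le, hx1, ?_⟩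
  have hF : ∑ k ∈ Finset.Icc θ n, (n.choose k : ℝ) * x ^ k * (1 - x) ^ (n - k) ≤ 2 ^ n * x ^ 2 := by
    calc _ ≤ ∑ k ∈ Finset.Icc θ n, (n.choose k : ℝ) * x ^ 2 := by
          refine Finset.sum_le_sum fun k hk => ?_
          have hk := (Finset.mem_Icc.1 hk).1
          have e1 : x ^ k ≤ x ^ 2 := pow_le_pow_of_le_one hx0.le hx1.le (by omega)
          have e2 : (1 - x) ^ (n - k) ≤ 1 := pow_le_one₀ (by linarith) (by linarith)
          calc _ ≤ (n.choose k : ℝ) * x ^ k * 1 := by gcongr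
            _ ≤ _ := by rw [mul_one]; gcongr
      _ ≤ ∑ k ∈ Finset.range (n+1), (n.choose k : ℝ) * x ^ 2 := by
          refine Finset.sum_le_sum_of_subset_of_nonneg ?_ fun _ _ _ => by positivity
          intro k hk; simp at hk ⊢; omega
      _ = _ := by
          rw [← Finset.sum_mul]
          congr 1
          exact_mod_cast Nat.sum_range_choose n
  have h3 := low_add n θ hθn x
  rw [lowBP_eq n θ hθn] at h3
  by_contra! hc
  nlinarith

theorem g_one (n θ : ℕ) (hθn : θ < n) : gBP n θ 1 = 0 := by
  unfold gBP
  refine Finset.sum_eq_zero fun k hk => ?_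
  have hk := Finset.mem_range.1 hk
  rw [sub_self, zero_pow (by omega), mul_zero]

theorem s_mem (n θ : ℕ) (hθn : θ < n) (p : ℝ) (h0 : 0 ≤ p) (h1 : p ≤ 1) (t : ℕ) :
    sBP n θ p t ∈ Set.Icc (0:ℝ) 1 := by
  induction t with
  | zero => exact ⟨h0, h1⟩
  | succ t ih =>
    have a := low_nonneg n θ _ ih.1 ih.2
    have b := low_le n θ hθn _ ih.1 ih.2
    rw [sBP, phi_eq n θ hθn]
    constructor <;> nlinarith

theorem stmt_17 (n θ : ℕ) (hθ : 2 ≤ θ) (hθn : θ < n) :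
    ∃ pc : ℝ, 0 < pc ∧ pc < 1 ∧
      (∀ p : ℝ, pc < p → p ≤ 1 →
        Filter.Tendsto (sBP n θ p) Filter.atTop (nhds 1)) ∧
      (∀ p : ℝ, 0 ≤ p → p < pc →
        ∃ L : ℝ, L < 1 ∧ Filter.Tendsto (sBP n θ p) Filter.atTop (nhds L)) := by
  have hcont : Continuous (gBP n θ) := by unfold gBP; fun_prop
  obtain ⟨x0, hx0, hmax⟩ := (isCompact_Icc (a := (0:ℝ)) (b := 1)).exists_isMaxOn
    ⟨0, by simp⟩ hcont.continuousOn
  obtain ⟨z, hz0, hz1, hz⟩ := exists_small n θ hθ hθn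
  have hM : 1 < gBP n θ x0 := hz.trans_le (hmax ⟨hz0, hz1.le⟩)
  set M := gBP n θ x0 with hMdef
  have hx1 : x0 < 1 := by
    refine lt_of_le_of_ne hx0.2 ?_
    intro h
    rw [hMdef, h, g_one n θ hθn] at hM
    linarith
  have hM0 : 0 < M := by linarith
  have hinv : M⁻¹ < 1 := inv_lt_one_of_one_lt₀ hM
  have hinv0 : 0 < M⁻¹ := inv_pos.2 hM0
  have hMM : M⁻¹ * M = 1 := inv_mul_cancel₀ hM0.ne'
  refine ⟨1 - M⁻¹, by linarith, by linarith, ?_, ?_⟩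
  · intro p hp hp1
    have hp0 : 0 ≤ p := by linarith
    have hr0 : 0 ≤ (1 - p) * M := mul_nonneg (by linarith) hM0.le
    have hr1 : (1 - p) * M < 1 := by nlinarith
    have hb : ∀ t, 1 - sBP n θ p t ≤ ((1 - p) * M) ^ t := by
      intro t
      induction t with
      | zero => simp [sBP, hp0]
      | succ t ih =>
        have hs := s_mem n θ hθn p hp0 hp1 t
        have hg : gBP n θ (sBP n θ p t) ≤ M := hmax hs
        rw [sBP, phi_eq n θ hθn, lowBP_eq n θ hθn]
        have h1 : 0 ≤ 1 - sBP n θ p t := by linarith [hs.2]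
        have h2 : 0 ≤ 1 - p := by linarith
        calc _ = (1 - p) * gBP n θ (sBP n θ p t) * (1 - sBP n θ p t) := by ring
          _ ≤ (1 - p) * M * (1 - sBP n θ p t) := by gcongr
          _ ≤ (1 - p) * M * ((1 - p) * M) ^ t := by gcongr
          _ = _ := by ring
    have ht : Filter.Tendsto (fun t : ℕ => 1 - ((1 - p) * M) ^ t) Filter.atTop (nhds 1) := by
      simpa using (tendsto_pow_atTop_nhds_zero_of_lt_one hr0 hr1).const_sub 1
    exact tendsto_of_tendsto_of_tendsto_of_le_of_le ht tendsto_const_nhds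
      (fun t => by have := hb t; simp only; linarith)
      (fun t => (s_mem n θ hθn p hp0 hp1 t).2)
  · intro p hp0 hp
    have hp1 : p ≤ 1 := by linarith
    have hr : 1 ≤ (1 - p) * M := by nlinarith
    have hanti := low_anti n θ hθ
    have hmono : ∀ a ∈ Set.Icc (0:ℝ) 1, ∀ b ∈ Set.Icc (0:ℝ) 1, a ≤ b →
        phiBP n θ p a ≤ phiBP n θ p b := by
      intro a ha b hb hab
      rw [phi_eq n θ hθn, phi_eq n θ hθn]
      have := hanti ha hb hab
      nlinarith
    have hfix : phiBP n θ p x0 ≤ x0 := by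
      rw [phi_eq n θ hθn, lowBP_eq n θ hθn]
      nlinarith
    have hpge : ∀ a ∈ Set.Icc (0:ℝ) 1, p ≤ phiBP n θ p a := by
      intro a ha
      rw [phi_eq n θ hθn]
      have := low_le n θ hθn a ha.1 ha.2
      nlinarith
    have hmem := s_mem n θ hθn p hp0 hp1
    have hle : ∀ t, sBP n θ p t ≤ x0 := by
      intro t
      induction t with
      | zero => exact (hpge x0 hx0).trans hfix
      | succ t ih => exact (hmono _ (hmem t) _ hx0 ih).trans hfix
    have hsm : Monotone (sBP n θ p) := by
      refine monotone_nat_of_le_succ fun t => ?_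
      induction t with
      | zero => exact hpge _ (hmem 0)
      | succ t ih => exact hmono _ (hmem t) _ (hmem (t+1)) ih
    have hbdd : BddAbove (Set.range (sBP n θ p)) := ⟨x0, by rintro _ ⟨t, rfl⟩; exact hle t⟩
    exact ⟨⨆ t, sBP n θ p t, (ciSup_le hle).trans_lt hx1, tendsto_atTop_ciSup hsm hbdd⟩
end
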